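/- Let E be a Banach space, T > 0, and let K be a Volterra kernel on [0,T] satisfying Condition (A) with exponent α ∈ [0, 1/4). Let φ: [0,T] → E be λ-Hölder continuous with λ > α. For a partition π = {s_i} of [0,T] let φ^π(s) := Σ_i φ(s_i) 1_{[s_i, s_{i+1})}(s). Then ∫_0^T ‖K*(φ^π − φ)(s)‖_E² ds → 0 as the mesh ‖π‖ := max_i (s_{i+1} − s_i) tends to 0; i.e., for every ε > 0 there is δ > 0 such that every partition with mesh < δ satisfies ∫_0^T ‖K*(φ^π − φ)(s)‖_E² ds < ε. -/

import Mathlib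

open MeasureTheory Set

noncomputable section

namespace YS

variable {E : Type*} [NormedAddCommGroup E] [NormedSpace ℝ E]

/-- A Volterra kernel: a measurable `K : ℝ² → ℝ` with `K t s = 0` whenever `s ≥ t`. -/
def IsVolterraKernel (K : ℝ → ℝ → ℝ) : Prop :=
  Measurable (Function.uncurry K) ∧ ∀ t s : ℝ, t ≤ s → K t s = 0

/-- Condition (A) with exponent `α` and constant `C`; here `K' t s` denotes the partial
derivative `∂K(t,s)/∂t`, whose existence is part of the condition. -/
def CondA (T α C : ℝ) (K K' : ℝ → ℝ → ℝ) : Prop :=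
  (∀ s t : ℝ, 0 < s → s < t → t ≤ T → |K t s| ≤ C * s ^ (-α) * (t - s) ^ (-α)) ∧
  ∀ s t : ℝ, 0 < s → s < t → t ≤ T →
    HasDerivAt (fun r => K r s) (K' t s) t ∧ |K' t s| ≤ C * (t - s) ^ (-(α + 1))

/-- The operator `𝒦*`:  `(𝒦*φ)(s) = φ(s)K(T,s) + ∫_s^T [φ(r) − φ(s)] ∂K(r,s)/∂r dr`. -/
def Kstar (T : ℝ) (K K' : ℝ → ℝ → ℝ) (φ : ℝ → E) (s : ℝ) : E :=
  K T s • φ s + ∫ r in s..T, K' r s • (φ r - φ s)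

/-- The operator `A^K`. -/
def AK (T : ℝ) (K' : ℝ → ℝ → ℝ) (φ : ℝ → E) (s : ℝ) : E :=
  ∫ r in s..T, K' r s • (φ r - φ s)

/-- Rectangular increment `f(u₁,u₂;v₁,v₂)`. -/
def rectInc (ψ : ℝ → ℝ → E) (u₁ u₂ v₁ v₂ : ℝ) : E :=
  ψ u₁ v₁ + ψ u₂ v₂ - ψ u₁ v₂ - ψ u₂ v₁

/-- The operator `B^K`. -/
def BK (T : ℝ) (K' : ℝ → ℝ → ℝ) (ψ : ℝ → ℝ → E) (u v : ℝ) : E :=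
  ∫ r₂ in v..T, ∫ r₁ in u..T, (K' r₁ u * K' r₂ v) • rectInc ψ u r₁ v r₂

/-- The operator `𝒦* ⊗ 𝒦*`. -/
def KstarT (T : ℝ) (K K' : ℝ → ℝ → ℝ) (ψ : ℝ → ℝ → E) (u v : ℝ) : E :=
  (K T u * K T v) • ψ u v + K T v • AK T K' (fun x => ψ x v) u +
    K T u • AK T K' (fun y => ψ u y) v + BK T K' ψ u v

/-- A partition `0 = s₀ < s₁ < ⋯ < s_n = T` of `[0,T]`. -/
structure Partition (T : ℝ) where
  n : ℕ
  pts : ℕ → ℝ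
  n_pos : 0 < n
  first : pts 0 = 0
  last : pts n = T
  lt : ∀ i < n, pts i < pts (i + 1)

/-- Mesh of a partition: the largest increment. -/
def Partition.mesh {T : ℝ} (P : Partition T) : ℝ :=
  (Finset.range P.n).sup' (Finset.nonempty_range_iff.mpr P.n_pos.ne')
    fun i => P.pts (i + 1) - P.pts i

/-- One-dimensional step approximation `φ^π`. -/
def step1 {T : ℝ} (P : Partition T) (φ : ℝ → E) (s : ℝ) : E :=
  ∑ i ∈ Finset.range P.n,
    (Set.Ico (P.pts i) (P.pts (i + 1))).indicator (fun _ => φ (P.pts i)) s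

/-- Two-dimensional step approximation `ψ^π` for the grid partition `P × Q`. -/
def step2 {T : ℝ} (P Q : Partition T) (ψ : ℝ → ℝ → E) (u v : ℝ) : E :=
  ∑ i ∈ Finset.range P.n, ∑ j ∈ Finset.range Q.n,
    ((Set.Ico (P.pts i) (P.pts (i + 1))) ×ˢ (Set.Ico (Q.pts j) (Q.pts (j + 1)))).indicator
      (fun _ => ψ (P.pts i) (Q.pts j)) (u, v)

/-- `λ`-Hölder continuity on `[0,T]` with constant `C`. -/
def IsHolderWith (T lam C : ℝ) (φ : ℝ → E) : Prop :=
  ∀ t₁ ∈ Icc (0:ℝ) T, ∀ t₂ ∈ Icc (0:ℝ) T, ‖φ t₁ - φ t₂‖ ≤ C * |t₁ - t₂| ^ lam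

/-- `λ`-Hölder continuity on `[0,T]`. -/
def IsHolder (T lam : ℝ) (φ : ℝ → E) : Prop := ∃ C : ℝ, IsHolderWith T lam C φ

/-- `λ`-Hölder bi-continuity with constant `C`. -/
def IsHolderBiWith (T lam C : ℝ) (ψ : ℝ → ℝ → E) : Prop :=
  (∀ u₁ ∈ Icc (0:ℝ) T, ∀ u₂ ∈ Icc (0:ℝ) T, ∀ v ∈ Icc (0:ℝ) T,
      ‖ψ u₂ v - ψ u₁ v‖ ≤ C * |u₂ - u₁| ^ lam) ∧
  ∀ u ∈ Icc (0:ℝ) T, ∀ v₁ ∈ Icc (0:ℝ) T, ∀ v₂ ∈ Icc (0:ℝ) T,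
      ‖ψ u v₂ - ψ u v₁‖ ≤ C * |v₂ - v₁| ^ lam

/-- `λ`-Hölder bi-continuity. -/
def IsHolderBi (T lam : ℝ) (ψ : ℝ → ℝ → E) : Prop := ∃ C : ℝ, IsHolderBiWith T lam C ψ

/-- Strong `λ`-Hölder bi-continuity with constant `C`. -/
def IsStrongHolderBiWith (T lam C : ℝ) (ψ : ℝ → ℝ → E) : Prop :=
  IsHolderBiWith T lam C ψ ∧
  ∀ u₁ ∈ Icc (0:ℝ) T, ∀ u₂ ∈ Icc (0:ℝ) T, ∀ v₁ ∈ Icc (0:ℝ) T, ∀ v₂ ∈ Icc (0:ℝ) T,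
    ‖rectInc ψ u₁ u₂ v₁ v₂‖ ≤ C * |u₂ - u₁| ^ lam * |v₂ - v₁| ^ lam

/-- Strong `λ`-Hölder bi-continuity. -/
def IsStrongHolderBi (T lam : ℝ) (ψ : ℝ → ℝ → E) : Prop :=
  ∃ C : ℝ, IsStrongHolderBiWith T lam C ψ

/-- The covariance function `R(s,t) = ∫_0^{s∧t} K(t,r)K(s,r) dr` of the Volterra process. -/
def covR (K : ℝ → ℝ → ℝ) (s t : ℝ) : ℝ := ∫ r in (0:ℝ)..(min s t), K t r * K s r

/-- The 2D Riemann–Stieltjes sum of `f` against `g` over the grid partition `P × Q`. -/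
def RSsum {T : ℝ} (P Q : Partition T) (f g : ℝ → ℝ → ℝ) : ℝ :=
  ∑ i ∈ Finset.range P.n, ∑ j ∈ Finset.range Q.n,
    f (P.pts i) (Q.pts j) *
      rectInc g (P.pts i) (P.pts (i + 1)) (Q.pts j) (Q.pts (j + 1))

theorem pts_mono {T : ℝ} (P : Partition T) {i j : ℕ} (hij : i ≤ j) (hj : j ≤ P.n) :
    P.pts i ≤ P.pts j := by
  induction j, hij using Nat.le_induction with
  | base => exact le_rfl
  | succ k hk ih => exact (ih (by omega)).trans (P.lt k (by omega)).le

theorem exists_cell {T : ℝ} (P : Partition T) {s : ℝ} (h0 : 0 ≤ s) (hs : s < T) :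
    ∃ i < P.n, s ∈ Ico (P.pts i) (P.pts (i + 1)) := by
  classical
  have hex : ∃ j, s < P.pts j := ⟨P.n, by rw [P.last]; exact hs⟩
  have h1 := Nat.find_spec hex
  have hle : Nat.find hex ≤ P.n := Nat.find_min' hex (by rw [P.last]; exact hs)
  have hpos : Nat.find hex ≠ 0 := by
    intro h
    rw [h, P.first] at h1
    linarith
  obtain ⟨k, hk⟩ := Nat.exists_eq_succ_of_ne_zero hpos
  have h2 := Nat.find_min hex (m := k) (by omega)
  rw [hk] at h1
  exact ⟨k, by omega, not_lt.mp h2, h1⟩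

theorem cell_unique {T : ℝ} (P : Partition T) {s : ℝ} {i j : ℕ} (hi : i < P.n) (hj : j < P.n)
    (hsi : s ∈ Ico (P.pts i) (P.pts (i + 1))) (hsj : s ∈ Ico (P.pts j) (P.pts (j + 1))) :
    j = i := by
  by_contra hne
  rcases lt_or_gt_of_ne hne with h | h
  · have := pts_mono P (i := j + 1) (j := i) h (by omega)
    linarith [hsi.1, hsj.2]
  · have := pts_mono P (i := i + 1) (j := j) h (by omega)
    linarith [hsj.1, hsi.2]

theorem step1_eq {F : Type*} [NormedAddCommGroup F] [NormedSpace ℝ F] {T : ℝ} (P : Partition T)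
    (φ : ℝ → F) {s : ℝ} {i : ℕ} (hi : i < P.n)
    (hs : s ∈ Ico (P.pts i) (P.pts (i + 1))) : step1 P φ s = φ (P.pts i) := by
  unfold step1
  rw [Finset.sum_eq_single i]
  · simp only [Set.indicator_of_mem hs]
  · intro j hj hji
    apply Set.indicator_of_notMem
    intro hsj
    exact hji (cell_unique P hi (Finset.mem_range.mp hj) hs hsj)
  · intro h
    exact absurd (Finset.mem_range.mpr hi) h

theorem le_mesh {T : ℝ} (P : Partition T) {i : ℕ} (hi : i < P.n) :
    P.pts (i + 1) - P.pts i ≤ P.mesh :=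
  Finset.le_sup' (fun i => P.pts (i + 1) - P.pts i) (Finset.mem_range.mpr hi)

theorem pts_mem {T : ℝ} (P : Partition T) {i : ℕ} (hi : i ≤ P.n) : P.pts i ∈ Icc (0:ℝ) T := by
  constructor
  · rw [← P.first]; exact pts_mono P (Nat.zero_le _) hi
  · exact (pts_mono P hi le_rfl).trans_eq P.last

theorem key_bound {F : Type*} [NormedAddCommGroup F] [NormedSpace ℝ F] {T lam β C δ : ℝ}
    (φ : ℝ → F) (hC : 0 ≤ C) (hφ : IsHolderWith T lam C φ) (hβ : 0 < β) (hβl : β < lam)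
    (hl1 : lam ≤ 1)
    (hδ : 0 < δ) (P : Partition T) (hP : P.mesh < δ) {i : ℕ} (hi : i < P.n) {s r : ℝ}
    (hs : s ∈ Ico (P.pts i) (P.pts (i + 1))) (hsr : s < r) (hr : r < T) :
    ‖(step1 P φ r - φ r) - (step1 P φ s - φ s)‖ ≤
      3 * C * δ ^ (lam - β) *
        ((P.pts (i + 1) - P.pts i) / (P.pts (i + 1) - s)) ^ β * (r - s) ^ β := by
  have hi0 := pts_mem P hi.le
  have hi1 := pts_mem P (i := i + 1) hi
  have hs0 : 0 ≤ s := hi0.1.trans hs.1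
  have hsI : s ∈ Icc (0:ℝ) T := ⟨hs0, by linarith⟩
  have hrI : r ∈ Icc (0:ℝ) T := ⟨by linarith, hr.le⟩
  obtain ⟨j, hj, hrj⟩ := exists_cell P (s := r) (by linarith) hr
  have hj0 := pts_mem P hj.le
  rw [step1_eq P φ hi hs, step1_eq P φ hj hrj]
  have hmi := le_mesh P hi
  have hmj := le_mesh P hj
  have hd : 0 < P.pts (i + 1) - s := by linarith [hs.2]
  have hDd : P.pts (i + 1) - s ≤ P.pts (i + 1) - P.pts i := by linarith [hs.1]
  set D := P.pts (i + 1) - P.pts i with hD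
  set d := P.pts (i + 1) - s with hdd
  have hD0 : 0 < D := by linarith
  have hY1 : 1 ≤ (D / d) ^ β := by
    apply Real.one_le_rpow _ hβ.le
    rwa [one_le_div hd]
  have hrs : 0 < r - s := by linarith
  have hηp : 0 < δ ^ (lam - β) := Real.rpow_pos_of_pos hδ _
  have hrsb : 0 < (r - s) ^ β := Real.rpow_pos_of_pos hrs _
  have hbase : ∀ x : ℝ, 0 ≤ x → x ≤ δ → x ^ lam ≤ δ ^ (lam - β) * x ^ β := by
    intro x hx hxδ
    have h1 : x ^ lam = x ^ (lam - β) * x ^ β := by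
      rw [← Real.rpow_add_of_nonneg hx (by linarith) hβ.le]; congr 1; ring
    rw [h1]
    gcongr
  -- final packaging
  have fin1 : ∀ c : ℝ, 0 ≤ c → c ≤ 3 → C * (c * (δ ^ (lam - β) * (r - s) ^ β)) ≤
      3 * C * δ ^ (lam - β) * (D / d) ^ β * (r - s) ^ β := by
    intro c hc0 hc
    calc C * (c * (δ ^ (lam - β) * (r - s) ^ β))
        ≤ C * (3 * (δ ^ (lam - β) * (r - s) ^ β)) := by gcongr
      _ = 3 * C * δ ^ (lam - β) * 1 * (r - s) ^ β := by ring
      _ ≤ _ := by gcongr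
  by_cases hcase : r < P.pts (i + 1)
  · have hji : j = i := cell_unique P hi hj ⟨by linarith [hs.1], hcase⟩ hrj
    subst hji
    have h1 := hφ s hsI r hrI
    have e : (φ (P.pts j) - φ r) - (φ (P.pts j) - φ s) = φ s - φ r := by abel
    rw [e]
    refine h1.trans ?_
    rw [abs_sub_comm, abs_of_pos hrs]
    have := hbase (r - s) hrs.le (by linarith [hs.1])
    refine le_trans ?_ (fin1 1 (by norm_num) (by norm_num))
    rw [one_mul]
    gcongr
  · push Not at hcase
    have hA := hφ _ hj0 r hrI
    have hB := hφ _ hi0 s hsI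
    have hCC := hφ _ hj0 _ hi0
    have hE := hφ s hsI r hrI
    rw [abs_sub_comm, abs_of_nonneg (by linarith [hrj.1])] at hA
    rw [abs_sub_comm, abs_of_nonneg (by linarith [hs.1])] at hB
    rw [abs_sub_comm, abs_of_pos hrs] at hE
    by_cases hbig : δ ≤ r - s
    · have hδl : δ ^ lam ≤ δ ^ (lam - β) * (r - s) ^ β := by
        refine (hbase δ hδ.le le_rfl).trans ?_
        gcongr
      have h1 : (r - P.pts j) ^ lam ≤ δ ^ lam :=
        Real.rpow_le_rpow (by linarith [hrj.1]) (by linarith [hrj.2]) (by linarith)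
      have h2 : (s - P.pts i) ^ lam ≤ δ ^ lam :=
        Real.rpow_le_rpow (by linarith [hs.1]) (by linarith [hs.2]) (by linarith)
      refine (norm_sub_le _ _).trans ?_
      refine le_trans ?_ (fin1 2 (by norm_num) (by norm_num))
      have h3 := mul_le_mul_of_nonneg_left (h1.trans hδl) hC
      have h4 := mul_le_mul_of_nonneg_left (h2.trans hδl) hC
      linarith
    · push Not at hbig
      have e : (φ (P.pts j) - φ r) - (φ (P.pts i) - φ s) =
          (φ (P.pts j) - φ (P.pts i)) + (φ s - φ r) := by abel
      rw [e]
      have hji : P.pts i ≤ P.pts j := by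
        have : i ≤ j := by
          by_contra hlt
          have := pts_mono P (i := j + 1) (j := i) (by omega) hi.le
          linarith [hrj.2, hs.1]
        exact pts_mono P this hj.le
      rw [abs_of_nonneg (by linarith)] at hCC
      have h0 : (P.pts j - P.pts i) ^ lam ≤ (r - s) ^ lam + D ^ lam := by
        refine le_trans ?_ (Real.rpow_add_le_add_rpow hrs.le hD0.le (by linarith) hl1)
        apply Real.rpow_le_rpow (by linarith) _ (by linarith)
        linarith [hrj.1, hs.2]
      have h1 := hbase (r - s) hrs.le hbig.le
      have h2 : D ^ lam ≤ δ ^ (lam - β) * (D / d) ^ β * (r - s) ^ β := by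
        refine (hbase D hD0.le (by linarith)).trans ?_
        rw [mul_assoc]
        gcongr
        rw [← Real.mul_rpow (by positivity) hrs.le]
        apply Real.rpow_le_rpow hD0.le _ hβ.le
        rw [div_mul_eq_mul_div, le_div_iff₀ hd]
        gcongr
        linarith
      have h3 : δ ^ (lam - β) * (r - s) ^ β ≤ δ ^ (lam - β) * (D / d) ^ β * (r - s) ^ β := by
        gcongr
        nlinarith
      refine (norm_add_le _ _).trans ?_
      set Z := δ ^ (lam - β) * (D / d) ^ β * (r - s) ^ β with hZ
      have h5 : C * (P.pts j - P.pts i) ^ lam ≤ C * (2 * Z) := by gcongr; linarith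
      have h6 : C * (r - s) ^ lam ≤ C * Z := by gcongr; linarith
      have h7 : 3 * C * δ ^ (lam - β) * (D / d) ^ β * (r - s) ^ β = C * (3 * Z) := by
        rw [hZ]; ring
      rw [h7]
      linarith

theorem pow_int {a s T : ℝ} (ha : -1 < a) (hs : s ≤ T) :
    IntegrableOn (fun r : ℝ => (r - s) ^ a) (Ioo s T) ∧
      ∫ r in Ioo s T, (r - s) ^ a = (T - s) ^ (a + 1) / (a + 1) := by
  constructor
  · have h := (intervalIntegral.intervalIntegrable_rpow' (a := 0) (b := T - s) ha).comp_sub_right s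
    simp only [zero_add, sub_add_cancel] at h
    rw [intervalIntegrable_iff_integrableOn_Ioo_of_le hs] at h
    exact h
  · rw [← integral_Ioc_eq_integral_Ioo, ← intervalIntegral.integral_of_le hs,
      intervalIntegral.integral_comp_sub_right (fun x => x ^ a) s, integral_rpow (Or.inl ha)]
    rw [sub_self, Real.zero_rpow (by linarith), sub_zero]

theorem pow_int' {a s T : ℝ} (ha : -1 < a) (hs : s ≤ T) :
    IntegrableOn (fun r : ℝ => (T - r) ^ a) (Ioo s T) ∧
      ∫ r in Ioo s T, (T - r) ^ a = (T - s) ^ (a + 1) / (a + 1) := by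
  constructor
  · have h := (intervalIntegral.intervalIntegrable_rpow' (a := T - s) (b := 0) ha).comp_sub_left T
    simp only [sub_zero, sub_sub_cancel] at h
    rw [intervalIntegrable_iff_integrableOn_Ioo_of_le hs] at h
    exact h
  · rw [← integral_Ioc_eq_integral_Ioo, ← intervalIntegral.integral_of_le hs,
      intervalIntegral.integral_comp_sub_left (fun x => x ^ a) T, integral_rpow (Or.inl ha)]
    rw [sub_self, Real.zero_rpow (by linarith), sub_zero]

theorem kstar_bound {F : Type*} [NormedAddCommGroup F] [NormedSpace ℝ F]
    {T α lam β C C' δ : ℝ} {K K' : ℝ → ℝ → ℝ} (hA : CondA T α C' K K') (hC' : 0 ≤ C')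
    (φ : ℝ → F) (hC : 0 ≤ C) (hφ : IsHolderWith T lam C φ) (hβ : 0 < β) (hβl : β < lam)
    (hl1 : lam ≤ 1) (hαβ : α < β)
    (hδ : 0 < δ) (hδ1 : δ ≤ 1) (P : Partition T) (hP : P.mesh < δ) {i : ℕ} (hi : i < P.n) {s : ℝ}
    (hs : s ∈ Ico (P.pts i) (P.pts (i + 1))) (hs0 : 0 < s) (hsT : s < T) :
    ‖Kstar T K K' (fun r => step1 P φ r - φ r) s‖ ≤
      C' * C * δ ^ (lam - β) * (s ^ (-α) * (T - s) ^ (-α) + 3 * (T ^ (β - α) / (β - α)) *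
        ((P.pts (i + 1) - P.pts i) / (P.pts (i + 1) - s)) ^ β) := by
  have hi0 := pts_mem P hi.le
  have hmi := le_mesh P hi
  have hTs : 0 < T - s := by linarith
  set Y := ((P.pts (i + 1) - P.pts i) / (P.pts (i + 1) - s)) ^ β with hY
  have hY0 : 0 ≤ Y := Real.rpow_nonneg (div_nonneg (by linarith [hs.1, hs.2]) (by linarith [hs.2])) _
  have hηp : 0 < δ ^ (lam - β) := Real.rpow_pos_of_pos hδ _
  have h1 : ‖K T s • (step1 P φ s - φ s)‖ ≤
      C' * C * δ ^ (lam - β) * (s ^ (-α) * (T - s) ^ (-α)) := by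
    rw [norm_smul, Real.norm_eq_abs, step1_eq P φ hi hs]
    have hB := hφ _ hi0 s ⟨hs0.le, hsT.le⟩
    rw [abs_sub_comm, abs_of_nonneg (by linarith [hs.1])] at hB
    have h2 : (s - P.pts i) ^ lam ≤ δ ^ (lam - β) :=
      (Real.rpow_le_rpow (by linarith [hs.1]) (by linarith [hs.2]) (by linarith)).trans
        (Real.rpow_le_rpow_of_exponent_ge hδ hδ1 (by linarith))
    have h3 := hA.1 s T hs0 hsT le_rfl
    calc |K T s| * ‖φ (P.pts i) - φ s‖
        ≤ (C' * s ^ (-α) * (T - s) ^ (-α)) * (C * δ ^ (lam - β)) := by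
          apply mul_le_mul h3 (hB.trans (by gcongr)) (norm_nonneg _) ((abs_nonneg _).trans h3)
      _ = _ := by ring
  have h2 : ‖∫ r in s..T, K' r s • ((step1 P φ r - φ r) - (step1 P φ s - φ s))‖ ≤
      C' * C * δ ^ (lam - β) * (3 * (T ^ (β - α) / (β - α)) * Y) := by
    rw [intervalIntegral.integral_of_le hsT.le, integral_Ioc_eq_integral_Ioo]
    obtain ⟨hint, hval⟩ := pow_int (a := β - α - 1) (by linarith) hsT.le
    have hb := norm_integral_le_of_norm_le (μ := volume.restrict (Ioo s T))
      (f := fun r => K' r s • ((step1 P φ r - φ r) - (step1 P φ s - φ s)))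
      (hint.const_mul (C' * (3 * C * δ ^ (lam - β) * Y))) (by
        rw [ae_restrict_iff' measurableSet_Ioo]
        refine Filter.Eventually.of_forall fun r hr => ?_
        rw [norm_smul, Real.norm_eq_abs]
        have hk := (hA.2 s r hs0 hr.1 hr.2.le).2
        have hkb := key_bound φ hC hφ hβ hβl hl1 hδ P hP hi hs hr.1 hr.2
        rw [← hY] at hkb
        have hrs : 0 < r - s := by linarith [hr.1]
        calc |K' r s| * ‖(step1 P φ r - φ r) - (step1 P φ s - φ s)‖
            ≤ (C' * (r - s) ^ (-(α + 1))) * (3 * C * δ ^ (lam - β) * Y * (r - s) ^ β) :=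
              mul_le_mul hk hkb (norm_nonneg _) ((abs_nonneg _).trans hk)
          _ = C' * (3 * C * δ ^ (lam - β) * Y) * ((r - s) ^ (-(α + 1)) * (r - s) ^ β) := by ring
          _ = _ := by
            rw [← Real.rpow_add hrs]; congr 2; ring)
    refine hb.trans ?_
    rw [integral_const_mul, hval, sub_add_cancel]
    have h5 : (T - s) ^ (β - α) ≤ T ^ (β - α) :=
      Real.rpow_le_rpow hTs.le (by linarith) (by linarith)
    have h6 : 0 < β - α := by linarith
    calc C' * (3 * C * δ ^ (lam - β) * Y) * ((T - s) ^ (β - α) / (β - α))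
        ≤ C' * (3 * C * δ ^ (lam - β) * Y) * (T ^ (β - α) / (β - α)) := by gcongr
      _ = _ := by ring
  unfold Kstar
  refine (norm_add_le _ _).trans ?_
  rw [mul_add]
  exact add_le_add h1 h2

theorem cell_int {a b β : ℝ} (hab : a < b) (hβ : β < 1 / 2) :
    IntegrableOn (fun s : ℝ => ((b - a) / (b - s)) ^ (2 * β)) (Ioo a b) ∧
      ∫ s in Ioo a b, ((b - a) / (b - s)) ^ (2 * β) = (b - a) / (1 - 2 * β) := by
  obtain ⟨h1, h2⟩ := pow_int' (a := -(2 * β)) (s := a) (T := b) (by linarith) hab.le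
  have hba : 0 < b - a := by linarith
  have he : ∀ s ∈ Ioo a b, (b - a) ^ (2 * β) * (b - s) ^ (-(2 * β)) =
      ((b - a) / (b - s)) ^ (2 * β) := by
    intro s hs
    have : 0 < b - s := by linarith [hs.2]
    rw [Real.div_rpow hba.le this.le, Real.rpow_neg this.le, div_eq_mul_inv]
  refine ⟨(integrableOn_congr_fun he measurableSet_Ioo).mp (h1.const_mul _), ?_⟩
  rw [← setIntegral_congr_fun measurableSet_Ioo he, integral_const_mul, h2, ← mul_div_assoc,
    ← Real.rpow_add hba]
  have : 2 * β + (-(2 * β) + 1) = 1 := by ring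
  rw [this, Real.rpow_one]
  congr 1; ring

/-- The comparison function. -/
def HH {T : ℝ} (P : Partition T) (β s : ℝ) : ℝ :=
  ∑ i ∈ Finset.range P.n, (Ico (P.pts i) (P.pts (i + 1))).indicator
    (fun s => ((P.pts (i + 1) - P.pts i) / (P.pts (i + 1) - s)) ^ (2 * β)) s

theorem HH_eq {T β : ℝ} (P : Partition T) {s : ℝ} {i : ℕ} (hi : i < P.n)
    (hs : s ∈ Ico (P.pts i) (P.pts (i + 1))) :
    HH P β s = ((P.pts (i + 1) - P.pts i) / (P.pts (i + 1) - s)) ^ (2 * β) := by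
  unfold HH
  rw [Finset.sum_eq_single i]
  · simp only [Set.indicator_of_mem hs]
  · intro j hj hji
    apply Set.indicator_of_notMem
    intro hsj
    exact hji (cell_unique P hi (Finset.mem_range.mp hj) hs hsj)
  · intro h
    exact absurd (Finset.mem_range.mpr hi) h

theorem HH_int {T β : ℝ} (P : Partition T) (hβ : β < 1 / 2) :
    Integrable (HH P β) ∧ ∫ s, HH P β s = T / (1 - 2 * β) := by
  have hint : ∀ i ∈ Finset.range P.n, Integrable ((Ico (P.pts i) (P.pts (i + 1))).indicator
    (fun s => ((P.pts (i + 1) - P.pts i) / (P.pts (i + 1) - s)) ^ (2 * β))) := by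
    intro i hi
    rw [integrable_indicator_iff measurableSet_Ico, integrableOn_Ico_iff_integrableOn_Ioo]
    exact (cell_int (P.lt i (Finset.mem_range.mp hi)) hβ).1
  constructor
  · exact integrable_finsetSum _ hint
  · unfold HH
    rw [integral_finsetSum _ hint]
    rw [Finset.sum_congr rfl (g := fun i => (P.pts (i + 1) - P.pts i) / (1 - 2 * β))]
    · rw [← Finset.sum_div, Finset.sum_range_sub, P.first, P.last, sub_zero]
    · intro i hi
      rw [integral_indicator measurableSet_Ico, integral_Ico_eq_integral_Ioo]
      exact (cell_int (P.lt i (Finset.mem_range.mp hi)) hβ).2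

/-- Proposition 2.4: for `λ`-Hölder `φ` with `λ > α`,
`∫_0^T ‖𝒦*(φ^π − φ)(s)‖² ds → 0` as the mesh of the partition tends to `0`. -/
theorem kstar_step1_tendsto_L2 {E : Type*} [NormedAddCommGroup E] [NormedSpace ℝ E]
    [CompleteSpace E] (T α lam : ℝ) (hT : 0 < T) (hα : 0 ≤ α) (hα' : α < 1 / 4)
    (K K' : ℝ → ℝ → ℝ) (hK : IsVolterraKernel K) (hA : ∃ C : ℝ, CondA T α C K K')
    (φ : ℝ → E) (hlam : 0 < lam) (hlam' : lam ≤ 1)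
    (hφ : IsHolder T lam φ) (hαlam : α < lam) :
    ∀ ε > 0, ∃ δ > 0, ∀ P : Partition T, P.mesh < δ →
      (∫ s in (0:ℝ)..T, ‖Kstar T K K' (fun r => step1 P φ r - φ r) s‖ ^ 2) < ε := by
  obtain ⟨C0, hC0⟩ := hA
  obtain ⟨C1, hC1⟩ := hφ
  have hA : CondA T α |C0| K K' := by
    refine ⟨fun s t h0 h1 h2 => (hC0.1 s t h0 h1 h2).trans ?_, fun s t h0 h1 h2 =>
      ⟨(hC0.2 s t h0 h1 h2).1, (hC0.2 s t h0 h1 h2).2.trans ?_⟩⟩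
    · have h3 : 0 < t - s := by linarith
      gcongr
      exact le_abs_self _
    · have h3 : 0 < t - s := by linarith
      gcongr
      exact le_abs_self _
  have hφ : IsHolderWith T lam |C1| φ := fun a ha b hb => (hC1 a ha b hb).trans (by
    gcongr
    exact le_abs_self _)
  have hC' := abs_nonneg C0
  have hC := abs_nonneg C1
  generalize |C0| = C' at hA hC'
  generalize |C1| = C at hφ hC
  obtain ⟨β, hαβ, hβ⟩ := exists_between (lt_min hαlam (show α < 1 / 2 by linarith))
  have hβl : β < lam := hβ.trans_le (min_le_left _ _)
  have hβ2 : β < 1 / 2 := hβ.trans_le (min_le_right _ _)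
  have hβ0 : 0 < β := by linarith
  set M := T ^ (β - α) / (β - α) with hM
  set A := 2 * (C' * C) ^ 2 * (1 + 9 * M ^ 2) with hAdef
  have hA0 : 0 ≤ A := by positivity
  obtain ⟨i1, -⟩ := pow_int (a := -(4 * α)) (by linarith) hT.le
  obtain ⟨i2, -⟩ := pow_int' (a := -(4 * α)) (by linarith) hT.le
  set B := (∫ s in Ioo 0 T, ((s - 0) ^ (-(4 * α)) + (T - s) ^ (-(4 * α)))) + T / (1 - 2 * β)
    with hB
  have hmain : ∀ δ : ℝ, 0 < δ → δ ≤ 1 → ∀ P : Partition T, P.mesh < δ →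
      (∫ s in (0:ℝ)..T, ‖Kstar T K K' (fun r => step1 P φ r - φ r) s‖ ^ 2) ≤
        (δ ^ (lam - β)) ^ 2 * (A * B) := by
    intro δ hδ hδ1 P hP
    obtain ⟨hH1, hH2⟩ := HH_int P hβ2
    have hHn : ∀ s, 0 ≤ HH P β s := by
      intro s
      unfold HH
      refine Finset.sum_nonneg fun i _ => Set.indicator_nonneg (fun x hx => ?_) _
      exact Real.rpow_nonneg (div_nonneg (by linarith [hx.1, hx.2]) (by linarith [hx.2])) _
    rw [intervalIntegral.integral_of_le hT.le, integral_Ioc_eq_integral_Ioo]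
    have hle : (∫ s in Ioo 0 T, ‖Kstar T K K' (fun r => step1 P φ r - φ r) s‖ ^ 2) ≤
        ∫ s in Ioo 0 T, (δ ^ (lam - β)) ^ 2 * A *
          (((s - 0) ^ (-(4 * α)) + (T - s) ^ (-(4 * α))) + HH P β s) := by
      apply integral_mono_of_nonneg
      · exact Filter.Eventually.of_forall fun s => by positivity
      · exact ((i1.add i2).add hH1.integrableOn).const_mul _
      · refine (ae_restrict_iff' measurableSet_Ioo).mpr (Filter.Eventually.of_forall fun s hs => ?_)
        obtain ⟨i, hi, hsi⟩ := exists_cell P hs.1.le hs.2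
        have hb := kstar_bound hA hC' φ hC hφ hβ0 hβl hlam' hαβ hδ hδ1 P hP hi hsi hs.1 hs.2
        have hx0 : 0 < (P.pts (i + 1) - P.pts i) / (P.pts (i + 1) - s) :=
          div_pos (by linarith [hsi.1, hsi.2]) (by linarith [hsi.2])
        have hs0 : 0 < s := hs.1
        have hTs : 0 < T - s := by linarith [hs.2]
        simp only [HH_eq P hi hsi, sub_zero]
        generalize (P.pts (i + 1) - P.pts i) / (P.pts (i + 1) - s) = x at hb hx0
        have sq : ∀ y c : ℝ, 0 < y → y ^ (2 * c) = (y ^ c) ^ 2 := by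
          intro y c hy
          rw [mul_comm, Real.rpow_mul hy.le]
          norm_num
        have e1 : ∀ y : ℝ, 0 < y → y ^ (-(4 * α)) = ((y ^ (-α)) ^ 2) ^ 2 := by
          intro y hy
          rw [← sq y _ hy, ← sq y _ hy]
          congr 1; ring
        rw [e1 s hs0, e1 _ hTs, sq x β hx0]
        rw [← hM] at hb
        generalize s ^ (-α) = u at hb
        generalize (T - s) ^ (-α) = v at hb
        generalize x ^ β = Y at hb
        generalize δ ^ (lam - β) = η at hb
        calc ‖Kstar T K K' (fun r => step1 P φ r - φ r) s‖ ^ 2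
            ≤ (C' * C * η * (u * v + 3 * M * Y)) ^ 2 := by gcongr
          _ = η ^ 2 * ((C' * C) ^ 2 * (u * v + 3 * M * Y) ^ 2) := by ring
          _ ≤ η ^ 2 * ((C' * C) ^ 2 * (2 * ((1 + 9 * M ^ 2) * ((u ^ 2) ^ 2 + (v ^ 2) ^ 2 + Y ^ 2)))) := by
            gcongr
            have a1 : (u * v + 3 * M * Y) ^ 2 ≤ 2 * ((u * v) ^ 2 + 9 * M ^ 2 * Y ^ 2) := by
              nlinarith [sq_nonneg (u * v - 3 * M * Y)]
            have a2 : (u * v) ^ 2 ≤ (u ^ 2) ^ 2 + (v ^ 2) ^ 2 := by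
              nlinarith [sq_nonneg (u ^ 2 - v ^ 2), sq_nonneg (u ^ 2), sq_nonneg (v ^ 2)]
            have a3 : 0 ≤ M ^ 2 * ((u ^ 2) ^ 2 + (v ^ 2) ^ 2) := by positivity
            nlinarith [sq_nonneg Y]
          _ = _ := by rw [hAdef]; ring
    refine hle.trans ?_
    rw [integral_const_mul, mul_assoc]
    gcongr
    have hadd : ∫ s in Ioo 0 T, (((s - 0) ^ (-(4 * α)) + (T - s) ^ (-(4 * α))) + HH P β s) =
        (∫ s in Ioo 0 T, ((s - 0) ^ (-(4 * α)) + (T - s) ^ (-(4 * α)))) +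
          ∫ s in Ioo 0 T, HH P β s := integral_add (i1.add i2) hH1.integrableOn
    rw [hadd, hB, ← hH2]
    exact add_le_add le_rfl (setIntegral_le_integral hH1 (Filter.Eventually.of_forall hHn))
  intro ε hε
  have ht : Filter.Tendsto (fun δ : ℝ => (δ ^ (lam - β)) ^ 2 * (A * B)) (nhdsWithin 0 (Ioi 0))
      (nhds 0) := by
    have h1 : Filter.Tendsto (fun δ : ℝ => (δ ^ (lam - β)) ^ 2 * (A * B)) (nhds 0)
        (nhds (((0:ℝ) ^ (lam - β)) ^ 2 * (A * B))) :=
      (((Real.continuousAt_rpow_const 0 (lam - β) (Or.inr (by linarith))).tendsto).pow 2).mul_const _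
    rw [Real.zero_rpow (by linarith)] at h1
    have h2 := h1.mono_left (nhdsWithin_le_nhds (s := Ioi (0:ℝ)))
    simpa using h2
  have h1 : ∀ᶠ δ : ℝ in nhdsWithin 0 (Ioi 0), δ ∈ Ioo (0:ℝ) 1 :=
    Ioo_mem_nhdsGT one_pos
  obtain ⟨δ, hd1, hd2⟩ := ((ht.eventually (gt_mem_nhds hε)).and h1).exists
  exact ⟨δ, hd2.1, fun P hP => (hmain δ hd2.1 hd2.2.le P hP).trans_lt hd1⟩


end YS
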